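/- Unique parameterization of open evaluation contexts: if P ∈ E_V and P ∈ E_W (i.e., the program context P is an open evaluation context with needed-variable sets V and W) then V = W. -/

import Mathlib

/-! ## Terms of the pure λ-calculus (named syntax) -/

inductive Term : Type
  | var : ℕ → Term
  | lam : ℕ → Term → Term
  | app : Term → Term → Term
  deriving DecidableEq

namespace Term

/-- Size of a term: |x| = 1, |λx.t| = |t|+1, |t u| = |t|+|u|+1. -/
def size : Term → ℕ
  | var _ => 1
  | lam _ t => size t + 1
  | app t u => size t + size u + 1

/-- Free variables of a term. -/
def fv : Term → Finset ℕ
  | var x => {x}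
  | lam x t => (fv t).erase x
  | app t u => fv t ∪ fv u

/-- Meta-level substitution t{x←u}. -/
def subst (x : ℕ) (u : Term) : Term → Term
  | var y => if y = x then u else var y
  | lam y t => if y = x then lam y t else lam y (subst x u t)
  | app t s => app (subst x u t) (subst x u s)

def isVarB : Term → Bool
  | var _ => true
  | _ => false

/-- Values are abstractions (variables are not values). -/
def IsValue (t : Term) : Prop := ∃ x u, t = lam x u

/-- Needed variables of a term. -/
def nv : Term → Finset ℕ
  | var x => {x}
  | lam _ _ => ∅
  | app t u => nv t ∪ nv u

/-- Applied variables of a term. -/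
def anv : Term → Finset ℕ
  | var _ => ∅
  | lam _ _ => ∅
  | app (var x) u => insert x (anv u)
  | app (lam y t) u => anv (lam y t) ∪ anv u
  | app (app t s) u => anv (app t s) ∪ anv u

/-- Unapplied variables of a term. -/
def unv : Term → Finset ℕ
  | var x => {x}
  | lam _ _ => ∅
  | app (var _) u => unv u
  | app (lam y t) u => unv (lam y t) ∪ unv u
  | app (app t s) u => unv (app t s) ∪ unv u

end Term

/-! ## Inert terms and fireballs: i ::= x | i f,  f ::= v | i -/

mutual
  inductive Term.Inert : Term → Prop
    | var (x : ℕ) : Term.Inert (Term.var x)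
    | app {i f : Term} : Term.Inert i → Term.Fireball f → Term.Inert (Term.app i f)
  inductive Term.Fireball : Term → Prop
    | val {x : ℕ} {t : Term} : Term.Fireball (Term.lam x t)
    | inert {i : Term} : Term.Inert i → Term.Fireball i
end

/-- Non-variable inert terms i⁺. -/
def Term.InertPlus (t : Term) : Prop := t.Inert ∧ ∀ x, t ≠ Term.var x

/-! ## β-reduction (closure of the root rule under arbitrary term contexts) -/

inductive Beta : Term → Term → Prop
  | beta (x : ℕ) (t u : Term) : Beta (Term.app (Term.lam x t) u) (Term.subst x u t)
  | lam {t t' : Term} (x : ℕ) : Beta t t' → Beta (Term.lam x t) (Term.lam x t')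
  | appL {t t' : Term} (u : Term) : Beta t t' → Beta (Term.app t u) (Term.app t' u)
  | appR {u u' : Term} (t : Term) : Beta u u' → Beta (Term.app t u) (Term.app t u')

/-- `iterRel R n a b`: an n-step R-reduction sequence from a to b. -/
def iterRel {α : Type} (R : α → α → Prop) : ℕ → α → α → Prop
  | 0 => Eq
  | n + 1 => fun a c => ∃ b, R a b ∧ iterRel R n b c

/-! ## Environments and programs -/

/-- Environments are finite lists of explicit substitutions, written
left-to-right, i.e. E[x←t] is `E ++ [(x, t)]`. -/
abbrev Env := List (ℕ × Term)

def Env.dom (E : Env) : Finset ℕ := (E.map Prod.fst).toFinset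

/-- Content of the leftmost explicit substitution on x. -/
def Env.lookupES : Env → ℕ → Option Term
  | [], _ => none
  | (y, t) :: E, x => if y = x then some t else Env.lookupES E x

structure Program where
  tm : Term
  env : Env

/-- p@[x←u] : appending an explicit substitution at the end of the environment. -/
def Program.appES (p : Program) (x : ℕ) (u : Term) : Program := ⟨p.tm, p.env ++ [(x, u)]⟩

/-- One step of the needed-variables computation along an explicit substitution. -/
def nvStep (V : Finset ℕ) (e : ℕ × Term) : Finset ℕ :=
  if e.1 ∈ V then (V.erase e.1) ∪ Term.nv e.2 else V

/-- Needed variables of a program. -/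
def Program.nv (p : Program) : Finset ℕ := p.env.foldl nvStep p.tm.nv

/-- One step of the applied-variables computation (carrying needed variables). -/
def anvStep : Finset ℕ × Finset ℕ → ℕ × Term → Finset ℕ × Finset ℕ
  | (N, A), (x, u) =>
    (nvStep N (x, u),
      if x ∈ N then
        match u with
        | Term.var y => if x ∈ A then (A.erase x) ∪ {y} else A.erase x
        | _ => (A.erase x) ∪ Term.anv u
      else A)

/-- Applied variables of a program. -/
def Program.anv (p : Program) : Finset ℕ :=
  (p.env.foldl anvStep (p.tm.nv, p.tm.anv)).2

/-- One step of the unapplied-variables computation (carrying needed variables). -/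
def unvStep : Finset ℕ × Finset ℕ → ℕ × Term → Finset ℕ × Finset ℕ
  | (N, U), (x, u) =>
    (nvStep N (x, u),
      if x ∈ U ∨ (x ∈ N ∧ u.isVarB = false) then (U.erase x) ∪ Term.unv u else U)

/-- Unapplied variables of a program. -/
def Program.unv (p : Program) : Finset ℕ :=
  (p.env.foldl unvStep (p.tm.nv, p.tm.unv)).2

/-- Unfolding of a program into a term: unf(t, ε) = t, unf(t, E[x←u]) = unf(t, E){x←u}. -/
def Program.unf (p : Program) : Term :=
  p.env.foldl (fun s e => Term.subst e.1 e.2 s) p.tm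

/-! ## Term contexts H ::= ⟨·⟩ | H t | i H (i inert, enforced by WF) -/

inductive HCtx : Type
  | hole : HCtx
  | appL : HCtx → Term → HCtx
  | appR : Term → HCtx → HCtx

namespace HCtx

/-- Well-formedness: in i H, the left part i must be an inert term. -/
def WF : HCtx → Prop
  | hole => True
  | appL H _ => WF H
  | appR i H => Term.Inert i ∧ WF H

def plug : HCtx → Term → Term
  | hole, t => t
  | appL H u, t => Term.app (plug H t) u
  | appR i H, t => Term.app i (plug H t)

def nv : HCtx → Finset ℕ
  | hole => ∅
  | appL H _ => nv H
  | appR i H => Term.nv i ∪ nv H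

def anv : HCtx → Finset ℕ
  | hole => ∅
  | appL H _ => anv H
  | appR i H => Term.anv i ∪ anv H

def unv : HCtx → Finset ℕ
  | hole => ∅
  | appL H _ => unv H
  | appR i H => Term.unv i ∪ unv H

end HCtx

/-- Applicative term contexts H@ ::= ⟨·⟩ t | H@ t | i H@. -/
inductive HCtx.IsApp : HCtx → Prop
  | base (t : Term) : HCtx.IsApp (HCtx.appL HCtx.hole t)
  | appL {H : HCtx} (t : Term) : HCtx.IsApp H → HCtx.IsApp (HCtx.appL H t)
  | appR {H : HCtx} {i : Term} : Term.Inert i → HCtx.IsApp H → HCtx.IsApp (HCtx.appR i H)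

/-! ## Program contexts: hole in the term part (tc) or inside an ES (ec) -/

inductive PCtx : Type
  | tc : HCtx → Env → PCtx
  | ec : Term → Env → ℕ → HCtx → Env → PCtx

namespace PCtx

/-- P@[x←u] : appending an explicit substitution at the end of the environment of P. -/
def appES : PCtx → ℕ → Term → PCtx
  | tc H E, x, u => tc H (E ++ [(x, u)])
  | ec t E1 y H E2, x, u => ec t E1 y H (E2 ++ [(x, u)])

/-- Plugging a term into a program context. -/
def plugT : PCtx → Term → Program
  | tc H E, t => ⟨H.plug t, E⟩
  | ec u E1 x H E2, t => ⟨u, E1 ++ (x, H.plug t) :: E2⟩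

/-- Plugging a program into a program context: the plugged environment is appended
right after the position of the hole. -/
def plugP : PCtx → Program → Program
  | tc H E, q => ⟨H.plug q.tm, q.env ++ E⟩
  | ec u E1 x H E2, q => ⟨u, E1 ++ (x, H.plug q.tm) :: (q.env ++ E2)⟩

/-- Variables bound by the environment of P. -/
def dom : PCtx → Finset ℕ
  | tc _ E => Env.dom E
  | ec _ E1 y _ E2 => insert y (Env.dom E1 ∪ Env.dom E2)

/-- P(x): content of the leftmost explicit substitution on x occurring after the hole. -/
def lookup : PCtx → ℕ → Option Term
  | tc _ E, x => Env.lookupES E x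
  | ec _ _ _ _ E2, x => Env.lookupES E2 x

/-- (P⟨x⟩)@[x←H] : plug the variable x in the hole of P and append the ES [x←H],
whose content H now contains the hole. -/
def hered (P : PCtx) (x : ℕ) (H : HCtx) : PCtx :=
  ec (P.plugT (Term.var x)).tm (P.plugT (Term.var x)).env x H []

end PCtx

/-! ## Open CbNeed evaluation contexts P ∈ E_V -/

inductive OEC : PCtx → Finset ℕ → Prop
  | ax {H : HCtx} : H.WF → OEC (PCtx.tc H []) H.nv
  | gc {P : PCtx} {V : Finset ℕ} {x : ℕ} (t : Term) :
      OEC P V → x ∉ V → x ∉ P.dom → OEC (P.appES x t) V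
  | inert {P : PCtx} {V : Finset ℕ} {x : ℕ} {i : Term} :
      OEC P V → x ∈ V → Term.Inert i → x ∉ P.dom →
      OEC (P.appES x i) ((V.erase x) ∪ i.nv)
  | her {P : PCtx} {V : Finset ℕ} {x : ℕ} {H : HCtx} :
      OEC P V → x ∉ V → x ∉ P.dom → H.WF →
      OEC (P.hered x H) (V ∪ H.nv)

/-! ## Open CbNeed reduction -/

inductive StepOM : Program → Program → Prop
  | mk {P : PCtx} {V : Finset ℕ} {x : ℕ} {t u : Term} :
      OEC P V →
      StepOM (P.plugT (Term.app (Term.lam x t) u)) (P.plugP ⟨t, [(x, u)]⟩)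

inductive StepOE : Program → Program → Prop
  | mk {P : PCtx} {V : Finset ℕ} {x : ℕ} {v : Term} :
      OEC P V → P.lookup x = some v → v.IsValue →
      StepOE (P.plugT (Term.var x)) (P.plugT v)

def StepOnd (p q : Program) : Prop := StepOM p q ∨ StepOE p q

/-! ## Open CbNeed normal programs -/

inductive PInert : Program → Prop
  | ax {i : Term} : i.Inert → PInert ⟨i, []⟩
  | inert {p : Program} {x : ℕ} {i : Term} :
      PInert p → x ∈ p.nv → i.Inert → PInert (p.appES x i)
  | gc {p : Program} {x : ℕ} (t : Term) :
      PInert p → x ∉ p.nv → PInert (p.appES x t)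

inductive PAbs : Program → Prop
  | ax {v : Term} : v.IsValue → PAbs ⟨v, []⟩
  | gc {p : Program} {x : ℕ} (t : Term) : PAbs p → PAbs (p.appES x t)

def ONorm (p : Program) : Prop := PInert p ∨ PAbs p

/-! ## Useful Open CbNeed: multiplicative and exponential evaluation contexts -/

def upd (S : Finset ℕ) (x y : ℕ) : Finset ℕ := if x ∈ S then (S.erase x) ∪ {y} else S

inductive MEC : PCtx → Finset ℕ → Finset ℕ → Prop
  | ax {H : HCtx} : H.WF → MEC (PCtx.tc H []) H.unv H.anv
  | var {P : PCtx} {U A : Finset ℕ} {x y : ℕ} :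
      MEC P U A → x ∈ U ∪ A → x ∉ P.dom →
      MEC (P.appES x (Term.var y)) (upd U x y) (upd A x y)
  | gc {P : PCtx} {U A : Finset ℕ} {x : ℕ} (t : Term) :
      MEC P U A → x ∉ U ∪ A → x ∉ P.dom → MEC (P.appES x t) U A
  | inert {P : PCtx} {U A : Finset ℕ} {x : ℕ} {i : Term} :
      MEC P U A → x ∈ U ∪ A → i.InertPlus → x ∉ P.dom →
      MEC (P.appES x i) ((U.erase x) ∪ i.unv) ((A.erase x) ∪ i.anv)
  | val {P : PCtx} {U A : Finset ℕ} {x : ℕ} {v : Term} :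
      MEC P U A → x ∈ U → x ∉ A → v.IsValue → x ∉ P.dom →
      MEC (P.appES x v) (U.erase x) A
  | her {P : PCtx} {U A : Finset ℕ} {x : ℕ} {H : HCtx} :
      MEC P U A → x ∉ U ∪ A → x ∉ P.dom → H.WF →
      MEC (P.hered x H) (U ∪ H.unv) (A ∪ H.anv)

/-- Exponential evaluation contexts P ∈ E@_{U,A}; the last (natural number) index
counts the number of applications of rule (e_NA) in the derivation. -/
inductive EEC : PCtx → Finset ℕ → Finset ℕ → ℕ → Prop
  | ax1 {H : HCtx} : H.IsApp → EEC (PCtx.tc H []) H.unv H.anv 0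
  | ax2 {P : PCtx} {U A : Finset ℕ} {x : ℕ} {H : HCtx} :
      MEC P U A → x ∉ U ∪ A → x ∉ P.dom → H.IsApp →
      EEC (P.hered x H) ((U.erase x) ∪ H.unv) (A ∪ H.anv) 0
  | var {P : PCtx} {U A : Finset ℕ} {k : ℕ} {x y : ℕ} :
      EEC P U A k → x ∈ U ∪ A → x ∉ P.dom →
      EEC (P.appES x (Term.var y)) (upd U x y) (upd A x y) k
  | inert {P : PCtx} {U A : Finset ℕ} {k : ℕ} {x : ℕ} {i : Term} :
      EEC P U A k → x ∈ U ∪ A → i.InertPlus → x ∉ P.dom →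
      EEC (P.appES x i) ((U.erase x) ∪ i.unv) ((A.erase x) ∪ i.anv) k
  | gc {P : PCtx} {U A : Finset ℕ} {k : ℕ} {x : ℕ} (t : Term) :
      EEC P U A k → x ∉ U ∪ A → x ∉ P.dom → EEC (P.appES x t) U A k
  | val {P : PCtx} {U A : Finset ℕ} {k : ℕ} {x : ℕ} {v : Term} :
      EEC P U A k → x ∈ U → x ∉ A → v.IsValue → x ∉ P.dom →
      EEC (P.appES x v) (U.erase x) A k
  | na {P : PCtx} {U A : Finset ℕ} {k : ℕ} {x : ℕ} :
      EEC P U A k → x ∉ A → x ∉ P.dom →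
      EEC (P.hered x HCtx.hole) (U.erase x) A (k + 1)

/-! ## Useful Open CbNeed reduction -/

inductive StepUM : Program → Program → Prop
  | mk {P : PCtx} {U A : Finset ℕ} {x : ℕ} {t u : Term} :
      MEC P U A →
      StepUM (P.plugT (Term.app (Term.lam x t) u)) (P.plugP ⟨t, [(x, u)]⟩)

inductive StepUE : Program → Program → Prop
  | mk {P : PCtx} {U A : Finset ℕ} {k : ℕ} {x : ℕ} {v : Term} :
      EEC P U A k → P.lookup x = some v → v.IsValue →
      StepUE (P.plugT (Term.var x)) (P.plugT v)

def StepUnd (p q : Program) : Prop := StepUM p q ∨ StepUE p q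

/-- Useful multiplicative steps whose evaluation context lies in Em_{U,A}. -/
def StepUMat (U A : Finset ℕ) (p q : Program) : Prop :=
  ∃ (P : PCtx) (x : ℕ) (t u : Term), MEC P U A ∧
    p = P.plugT (Term.app (Term.lam x t) u) ∧ q = P.plugP ⟨t, [(x, u)]⟩

/-- Useful exponential steps whose evaluation context lies in E@_{U,A}. -/
def StepUEat (U A : Finset ℕ) (p q : Program) : Prop :=
  ∃ (P : PCtx) (k : ℕ) (x : ℕ) (v : Term), EEC P U A k ∧
    P.lookup x = some v ∧ v.IsValue ∧
    p = P.plugT (Term.var x) ∧ q = P.plugT v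

/-! ## Useful normal-form predicates -/

inductive GenVar : ℕ → Program → Prop
  | ax (x : ℕ) : GenVar x ⟨Term.var x, []⟩
  | her {x : ℕ} {p : Program} (y : ℕ) : GenVar x p → GenVar y (p.appES x (Term.var y))
  | gc {x z : ℕ} {p : Program} (t : Term) : GenVar x p → z ≠ x → GenVar x (p.appES z t)

inductive UfAbs : Program → Prop
  | ax {v : Term} : v.IsValue → UfAbs ⟨v, []⟩
  | gv {p : Program} {x : ℕ} {v : Term} : GenVar x p → v.IsValue → UfAbs (p.appES x v)
  | gc {p : Program} {x : ℕ} (t : Term) : UfAbs p → UfAbs (p.appES x t)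

inductive UfInert : Program → Prop
  | ax {i : Term} : i.InertPlus → UfInert ⟨i, []⟩
  | gv {p : Program} {x : ℕ} {i : Term} : GenVar x p → i.InertPlus → UfInert (p.appES x i)
  | inert {p : Program} {x : ℕ} {i : Term} :
      UfInert p → x ∈ p.nv → i.Inert → UfInert (p.appES x i)
  | useless {p : Program} {x : ℕ} {v : Term} :
      UfInert p → x ∈ p.unv → x ∉ p.anv → v.IsValue → UfInert (p.appES x v)
  | gc {p : Program} {x : ℕ} (t : Term) : UfInert p → x ∉ p.nv → UfInert (p.appES x t)

def UfNorm (p : Program) : Prop := UfInert p ∨ UfAbs p ∨ ∃ x, GenVar x p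

/-! ## The size-exploding family -/

/-- t₁ := λx.λy. y x x  (x := 0, y := 1). -/
def t1 : Term := Term.lam 0 (Term.lam 1 (Term.app (Term.app (Term.var 1) (Term.var 0)) (Term.var 0)))

/-- λy. y x x. -/
def tbody : Term := Term.lam 1 (Term.app (Term.app (Term.var 1) (Term.var 0)) (Term.var 0))

/-- The family t_n (values for n ≥ 1; tfam 0 is a dummy). -/
def tfam : ℕ → Term
  | 0 => t1
  | 1 => t1
  | n + 2 => Term.lam 0 (Term.app (tfam (n + 1)) tbody)

/-- I := λz.z. -/
def Idt : Term := Term.lam 2 (Term.var 2)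

/-- The family u_n : u₀ = I, u_{n+1} = λy. y u_n u_n. -/
def ufam : ℕ → Term
  | 0 => Idt
  | n + 1 => Term.lam 1 (Term.app (Term.app (Term.var 1) (ufam n)) (ufam n))

theorem aux_mem_nv (H : HCtx) (x : ℕ) : x ∈ (H.plug (Term.var x)).nv := by
  induction H with
  | hole => simp [HCtx.plug, Term.nv]
  | appL H t ih => simp [HCtx.plug, Term.nv, ih]
  | appR i H ih => simp [HCtx.plug, Term.nv, ih]

theorem aux_hctx (H : HCtx) : ∀ (K : HCtx) (x y : ℕ),
    H.plug (Term.var x) = K.plug (Term.var y) → x ∉ K.nv → y ∉ H.nv →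
    x = y ∧ H.nv = K.nv := by
  induction H with
  | hole =>
    intro K x y h hx hy
    cases K <;> simp_all [HCtx.plug]
  | appL H t ih =>
    intro K x y h hx hy
    cases K with
    | hole => simp [HCtx.plug] at h
    | appL K s =>
      simp only [HCtx.plug, Term.app.injEq] at h
      exact ih K x y h.1 hx hy
    | appR i K =>
      simp only [HCtx.plug, Term.app.injEq] at h
      have := aux_mem_nv H x
      rw [h.1] at this
      simp [HCtx.nv, this] at hx
  | appR i H ih =>
    intro K x y h hx hy
    cases K with
    | hole => simp [HCtx.plug] at h
    | appL K s =>
      simp only [HCtx.plug, Term.app.injEq] at h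
      have := aux_mem_nv K y
      rw [← h.1] at this
      simp [HCtx.nv, this] at hy
    | appR j K =>
      simp only [HCtx.plug, Term.app.injEq] at h
      simp only [HCtx.nv, Finset.mem_union, not_or] at hx hy
      obtain ⟨h1, h2⟩ := ih K x y h.2 hx.2 hy.2
      refine ⟨h1, ?_⟩
      simp [HCtx.nv, h2, h.1]

theorem aux_plug_appES (P : PCtx) (z : ℕ) (t u : Term) :
    (P.appES z t).plugT u = (P.plugT u).appES z t := by
  cases P <;> simp [PCtx.appES, PCtx.plugT, Program.appES]

theorem aux_plug_hered (P : PCtx) (z : ℕ) (H : HCtx) (u : Term) :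
    (P.hered z H).plugT u = (P.plugT (Term.var z)).appES z (H.plug u) := by
  simp [PCtx.hered, PCtx.plugT, Program.appES]

theorem aux_dom (P : PCtx) (u : Term) : P.dom = Env.dom (P.plugT u).env := by
  cases P <;> ext <;> simp [PCtx.dom, PCtx.plugT, Env.dom] <;> grind

theorem aux_dom_appES (p : Program) (x z : ℕ) (t : Term) :
    x ∈ Env.dom (p.appES z t).env ↔ x ∈ Env.dom p.env ∨ x = z := by
  simp [Env.dom, Program.appES]; grind

theorem aux_inj {p q : Program} {x y : ℕ} {t u : Term}
    (h : p.appES x t = q.appES y u) : p = q ∧ x = y ∧ t = u := by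
  cases p; cases q
  simp only [Program.appES, Program.mk.injEq] at h ⊢
  obtain ⟨h1, h2⟩ := h
  have := List.append_inj' h2 rfl
  simp_all

theorem aux_ne {p : Program} {x : ℕ} {t s : Term} : p.appES x t ≠ ⟨s, []⟩ := by
  simp [Program.appES]

theorem aux_main {P : PCtx} {V : Finset ℕ} (hP : OEC P V) :
    ∀ (Q : PCtx) (W : Finset ℕ) (x y : ℕ), OEC Q W →
      P.plugT (Term.var x) = Q.plugT (Term.var y) →
      x ∉ V → x ∉ W → y ∉ V → y ∉ W →
      x ∉ Env.dom (P.plugT (Term.var x)).env → y ∉ Env.dom (P.plugT (Term.var x)).env →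
      x = y ∧ V = W := by
  induction hP with
  | @ax H hH =>
    intro Q W x y hQ h hxV hxW hyV hyW hx hy
    cases hQ with
    | @ax K hK =>
      simp only [PCtx.plugT, Program.mk.injEq] at h
      exact aux_hctx H K x y h.1 hxW hyV
    | gc t _ _ _ => rw [aux_plug_appES] at h; exact absurd h.symm aux_ne
    | inert _ _ _ _ => rw [aux_plug_appES] at h; exact absurd h.symm aux_ne
    | her _ _ _ _ => rw [aux_plug_hered] at h; exact absurd h.symm aux_ne
  | @gc P V z t hP hz hd ih =>
    intro Q W x y hQ h hxV hxW hyV hyW hx hy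
    rw [aux_plug_appES] at h hx hy
    rw [aux_dom_appES, not_or] at hx hy
    cases hQ with
    | ax _ => exact absurd h aux_ne
    | gc t hQ hz' _ =>
      rw [aux_plug_appES] at h
      obtain ⟨h1, rfl, rfl⟩ := aux_inj h
      exact ih _ _ x y hQ h1 hxV hxW hyV hyW hx.1 hy.1
    | inert hQ hz' _ _ =>
      rw [aux_plug_appES] at h
      obtain ⟨h1, rfl, rfl⟩ := aux_inj h
      have := ih _ _ x y hQ h1 hxV (by grind) hyV (by grind) hx.1 hy.1
      grind
    | her hQ hz' _ _ =>
      rw [aux_plug_hered] at h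
      obtain ⟨h1, rfl, rfl⟩ := aux_inj h
      have := ih _ _ x z hQ h1 hxV (by grind) hz hz' hx.1 (by rwa [← aux_dom])
      exact absurd this.1 hx.2
  | @inert P V z i hP hz hi hd ih =>
    intro Q W x y hQ h hxV hxW hyV hyW hx hy
    rw [aux_plug_appES] at h hx hy
    rw [aux_dom_appES, not_or] at hx hy
    cases hQ with
    | ax _ => exact absurd h aux_ne
    | gc t hQ hz' _ =>
      rw [aux_plug_appES] at h
      obtain ⟨h1, rfl, rfl⟩ := aux_inj h
      have := ih _ _ x y hQ h1 (by grind) hxW (by grind) hyW hx.1 hy.1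
      grind
    | inert hQ hz' _ _ =>
      rw [aux_plug_appES] at h
      obtain ⟨h1, rfl, rfl⟩ := aux_inj h
      have := ih _ _ x y hQ h1 (by grind) (by grind) (by grind) (by grind) hx.1 hy.1
      grind
    | @her _ _ _ K hQ hz' _ _ =>
      rw [aux_plug_hered] at h
      obtain ⟨h1, rfl, rfl⟩ := aux_inj h
      have := aux_mem_nv K y
      grind
  | @her P V z H hP hz hd hH ih =>
    intro Q W x y hQ h hxV hxW hyV hyW hx hy
    rw [aux_plug_hered] at h hx hy
    rw [aux_dom_appES, not_or] at hx hy
    have hzd : z ∉ Env.dom (P.plugT (Term.var z)).env := by rwa [← aux_dom]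
    cases hQ with
    | ax _ => exact absurd h aux_ne
    | gc t hQ hz' _ =>
      rw [aux_plug_appES] at h
      obtain ⟨h1, rfl, rfl⟩ := aux_inj h
      have := ih _ _ z y hQ h1 hz hz' (by grind) hyW hzd hy.1
      exact absurd this.1.symm hy.2
    | inert hQ hz' _ _ =>
      rw [aux_plug_appES] at h
      obtain ⟨h1, rfl, rfl⟩ := aux_inj h
      have := aux_mem_nv H x
      grind
    | @her _ _ _ K hQ hz' _ _ =>
      rw [aux_plug_hered] at h
      obtain ⟨h1, rfl, h3⟩ := aux_inj h
      have h4 := ih _ _ z z hQ h1 hz hz' hz hz' hzd hzd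
      have h5 := aux_hctx H K x y h3 (by grind) (by grind)
      exact ⟨h5.1, by rw [h4.2, h5.2]⟩

/-- unique parameterization of open evaluation contexts. -/
theorem OEC_unique_parameterization :
    ∀ (P : PCtx) (V W : Finset ℕ), OEC P V → OEC P W → V = W := by
  intro P V W hV hW
  obtain ⟨x, hx⟩ := Infinite.exists_notMem_finset (V ∪ W ∪ P.dom)
  simp only [Finset.mem_union, not_or] at hx
  obtain ⟨⟨h1, h2⟩, h3⟩ := hx
  rw [aux_dom P (Term.var x)] at h3
  exact (aux_main hV P W x x hW rfl h1 h2 h1 h2 h3 h3).2
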